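/- arXiv:1703.05946 — 4 statements merged into one kernel-verified Lean document; each statement's English description precedes it below -/
import Mathlib

section
/- Let T : ℝ ⇒ ℝ be a maximal monotone operator belonging to the class 𝒯. Then there exists a proper, lower semicontinuous function f : ℝ → (-∞,+∞] such that the function x ↦ f(x) + ½x² belongs to the class F and, for every x ∈ ℝ, T(x) = argmin_{y ∈ ℝ} { f(y) + ½(x − y)² }. -/
/-!
Put `h y = f y + y² / 2`. Expanding the square, `y` minimizes `f z + (x - z)² / 2` iff `x` is a
subgradient of `h` at `y`. So the task is to find a convex lower semicontinuous `h` in the class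
`F` with `y ∈ T x ↔ x ∈ ∂h(y)`.

Existence of `h` (`exists_convex_of_maxMonotone`): integrating an increasing function that
interpolates the inverse of `T` gives a potential `k` on the range of `T` (`exists_potential`).
Let `h` be the supremum of the affine functions `z ↦ k y + x (z - y)` over the graph of `T`.
Then `∂h` contains the inverse of `T` and is monotone, so the two agree by maximality.

Membership in `F` (`memF_of_pieces`): an operator whose graph is contained in that of a maximal
monotone one and which is itself maximal equals it, so `T` has the piecewise structure. The sets `T b`, for `b` a
breakpoint, and the images of the open intervals between breakpoints are intervals covering the
range of `T`. Take their endpoints as breakpoints for `h`. An open interval `I` avoiding these is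
either disjoint from the range, where `h = ⊤`, or contained in one of these sets. If `I ⊆ T x` for
some `x`, then `h` is affine on `I`; if `I` lies in the image of an interval on which `T` is
strictly increasing, then `h` is strictly convex and differentiable on `I`.
-/

noncomputable section


/-- Finite sets of breakpoints `-∞ = b₀ < b₁ < ⋯ < b_m = +∞`. -/
structure Breakpoints where
  m : ℕ
  hm : 0 < m
  pts : ℕ → EReal
  bot : pts 0 = ⊥
  top : pts m = ⊤
  mono : ∀ i j : ℕ, i < j → j ≤ m → pts i < pts j

/-- The `i`-th open interval `(bᵢ, bᵢ₊₁)` determined by the breakpoints. -/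
def Breakpoints.itv (B : Breakpoints) (i : ℕ) : Set ℝ :=
  {x : ℝ | B.pts i < (x : EReal) ∧ (x : EReal) < B.pts (i + 1)}

/-- Convexity for extended-real-valued functions on `ℝ`. -/
def ERealConvex (f : ℝ → EReal) : Prop :=
  ∀ x y a b : ℝ, 0 ≤ a → 0 ≤ b → a + b = 1 →
    f (a * x + b * y) ≤ (a : EReal) * f x + (b : EReal) * f y

/-- The effective domain of an extended-real-valued function nowhere equal to `-∞`. -/
def effDom (f : ℝ → EReal) : Set ℝ := {x : ℝ | f x ≠ ⊤}

/-- `f` is (finite and) affine on `s`. -/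
def IsAffineOn (f : ℝ → EReal) (s : Set ℝ) : Prop :=
  ∃ c d : ℝ, ∀ x ∈ s, f x = ((c * x + d : ℝ) : EReal)

/-- `f` is (finite,) strictly convex and differentiable on `s`. -/
def IsStrictConvexDiffOn (f : ℝ → EReal) (s : Set ℝ) : Prop :=
  ∃ g : ℝ → ℝ, (∀ x ∈ s, f x = (g x : EReal)) ∧ StrictConvexOn ℝ s g ∧
    ∀ x ∈ s, DifferentiableAt ℝ g x

/-- Membership in the class `F(A)` for the breakpoint set `A = B`. -/
def MemFA (B : Breakpoints) (f : ℝ → EReal) : Prop :=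
  (∀ x, f x ≠ ⊥) ∧ LowerSemicontinuous f ∧ ERealConvex f ∧
  ContinuousOn f (effDom f) ∧
  ∀ i : ℕ, i < B.m →
    IsAffineOn f (B.itv i) ∨ IsStrictConvexDiffOn f (B.itv i) ∨
      ∀ x ∈ B.itv i, f x = ⊤

/-- Membership in the class `F`. -/
def MemF (f : ℝ → EReal) : Prop := ∃ B : Breakpoints, MemFA B f

/-- The convex subdifferential of `f : ℝ → (-∞,+∞]` (empty outside the effective domain). -/
def subdiff (f : ℝ → EReal) (x : ℝ) : Set ℝ :=
  {φ : ℝ | f x ≠ ⊤ ∧ ∀ y : ℝ, ((φ * (y - x) : ℝ) : EReal) + f x ≤ f y}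

/-- `T` is a monotone operator. -/
def MonotoneOp (T : ℝ → Set ℝ) : Prop :=
  ∀ ⦃x u y v : ℝ⦄, u ∈ T x → v ∈ T y → 0 ≤ (u - v) * (x - y)

/-- `T` is a maximal monotone operator: its graph is not properly contained in the
graph of any monotone operator. -/
def MaxMonotoneOp (T : ℝ → Set ℝ) : Prop :=
  MonotoneOp T ∧
    ∀ S : ℝ → Set ℝ, MonotoneOp S → (∀ x, T x ⊆ S x) → ∀ x, S x ⊆ T x

/-- `T` is single-valued and constant on `s`. -/
def SingleConstOn (T : ℝ → Set ℝ) (s : Set ℝ) : Prop :=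
  ∃ c : ℝ, ∀ x ∈ s, T x = {c}

/-- `T` is single-valued, continuous and strictly monotone on `s`. -/
def SingleContStrictMonoOn (T : ℝ → Set ℝ) (s : Set ℝ) : Prop :=
  ∃ g : ℝ → ℝ, (∀ x ∈ s, T x = {g x}) ∧ ContinuousOn g s ∧ StrictMonoOn g s

/-- `T` is identically equal to the empty set on `s`. -/
def EmptyOn (T : ℝ → Set ℝ) (s : Set ℝ) : Prop := ∀ x ∈ s, T x = ∅

/-- Membership in the class `𝒯(B)`. -/
def MemTB (B : Breakpoints) (T : ℝ → Set ℝ) : Prop :=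
  ∃ T' : ℝ → Set ℝ, MaxMonotoneOp T' ∧ (∀ x, T x ⊆ T' x) ∧
    ∀ i : ℕ, i < B.m →
      SingleConstOn T' (B.itv i) ∨ SingleContStrictMonoOn T' (B.itv i) ∨
        EmptyOn T' (B.itv i)

/-- Membership in the class `𝒯`. -/
def MemT (T : ℝ → Set ℝ) : Prop := ∃ B : Breakpoints, MemTB B T

open Set Filter Topology MeasureTheory

/-! ### Potentials and convex functions on the line -/

/-- A monotone operator on the line has a potential: a function on the range of `T` for which
every `x` with `y ∈ T x` is a subgradient at `y`, relative to the range. It is obtained by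
integrating an increasing function `s` squeezed between the values of the inverse operator. -/
theorem exists_potential (T : ℝ → Set ℝ) (hT : MonotoneOp T) :
    ∃ k : ℝ → ℝ, ∀ ⦃x y x' z : ℝ⦄, y ∈ T x → z ∈ T x' → k y + x * (z - y) ≤ k z := by
  by_cases hne : ∃ x₀ y₀, y₀ ∈ T x₀
  swap
  · exact ⟨fun _ => 0, fun x y x' z hy _ => (hne ⟨x, y, hy⟩).elim⟩
  obtain ⟨x₀, y₀, h₀⟩ := hne
  have hlt : ∀ ⦃x y x' z : ℝ⦄, y ∈ T x → z ∈ T x' → y < z → x ≤ x' := by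
    intro x y x' z hy hz hyz
    by_contra hcon
    nlinarith [hT hy hz]
  -- Looking strictly below `t` keeps `s` finite on `(y, z]` for all `y < z` in the range of `T`.
  let s : ℝ → ℝ := fun t => sSup {x | ∃ y ∈ T x, y < t}
  have hbdd : ∀ ⦃x' z t : ℝ⦄, z ∈ T x' → t ≤ z → x' ∈ upperBounds {x | ∃ y ∈ T x, y < t} := by
    rintro x' z t hz htz x ⟨y, hy, hyt⟩
    exact hlt hy hz (hyt.trans_le htz)
  have hs : ∀ ⦃x y x' z t : ℝ⦄, y ∈ T x → z ∈ T x' → y < t → t ≤ z → x ≤ s t ∧ s t ≤ x' := by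
    intro x y x' z t hy hz hyt htz
    exact ⟨le_csSup ⟨x', hbdd hz htz⟩ ⟨y, hy, hyt⟩, csSup_le ⟨x, y, hy, hyt⟩ (hbdd hz htz)⟩
  have hint0 : ∀ ⦃x y x' z : ℝ⦄, y ∈ T x → z ∈ T x' → y ≤ z →
      IntervalIntegrable s volume y z := by
    intro x y x' z hy hz hyz
    rw [intervalIntegrable_iff_integrableOn_Ioc_of_le hyz]
    have hmono : MonotoneOn s (Ioc y z) := by
      intro t ht t' ht' htt
      refine csSup_le_csSup ⟨x', hbdd hz ht'.2⟩ ⟨x, y, hy, ht.1⟩ ?_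
      rintro w ⟨v, hv, hvt⟩
      exact ⟨v, hv, hvt.trans_le htt⟩
    refine IntegrableOn.of_bound (by simp)
      (aemeasurable_restrict_of_monotoneOn measurableSet_Ioc hmono).aestronglyMeasurable
      (max |x| |x'|) ?_
    refine (ae_restrict_iff' measurableSet_Ioc).2 (Eventually.of_forall fun t ht => ?_)
    obtain ⟨h1, h2⟩ := hs hy hz ht.1 ht.2
    exact abs_le_max_abs_abs h1 h2
  have hint : ∀ ⦃x y x' z : ℝ⦄, y ∈ T x → z ∈ T x' → IntervalIntegrable s volume y z := by
    intro x y x' z hy hz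
    rcases le_total y z with h | h
    · exact hint0 hy hz h
    · exact (hint0 hz hy h).symm
  refine ⟨fun y => ∫ t in y₀..y, s t, fun x y x' z hy hz => ?_⟩
  have hsub := intervalIntegral.integral_interval_sub_left (hint h₀ hz) (hint h₀ hy)
  dsimp only
  rcases le_total y z with h | h
  · have := intervalIntegral.integral_mono_on_of_le_Ioo (μ := volume) h
      (intervalIntegrable_const (c := x)) (hint hy hz)
      (fun t ht => (hs hy hz ht.1 ht.2.le).1)
    rw [intervalIntegral.integral_const, smul_eq_mul] at this
    linarith
  · have := intervalIntegral.integral_mono_on_of_le_Ioo (μ := volume) h (hint hz hy)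
      (intervalIntegrable_const (c := x))
      (fun t ht => (hs hz hy ht.1 ht.2.le).2)
    rw [intervalIntegral.integral_const, smul_eq_mul] at this
    rw [intervalIntegral.integral_symm z y] at hsub
    linarith

theorem coe_toReal_of_mem {h : ℝ → EReal} (hb : ∀ x, h x ≠ ⊥) {x : ℝ} (hx : h x ≠ ⊤) :
    ((h x).toReal : EReal) = h x := EReal.coe_toReal hx (hb x)

theorem convexOn_toReal {h : ℝ → EReal} (hb : ∀ x, h x ≠ ⊥) (hc : ERealConvex h) :
    ConvexOn ℝ (effDom h) (fun x => (h x).toReal) := by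
  have key : ∀ ⦃x⦄, h x ≠ ⊤ → ∀ ⦃y⦄, h y ≠ ⊤ → ∀ ⦃a b : ℝ⦄, 0 ≤ a → 0 ≤ b → a + b = 1 →
      h (a * x + b * y) ≤ ((a * (h x).toReal + b * (h y).toReal : ℝ) : EReal) := by
    intro x hx y hy a b ha hb' hab
    have := hc x y a b ha hb' hab
    rw [← coe_toReal_of_mem hb hx, ← coe_toReal_of_mem hb hy] at this
    exact_mod_cast this
  have hdom : ∀ ⦃x⦄, h x ≠ ⊤ → ∀ ⦃y⦄, h y ≠ ⊤ → ∀ ⦃a b : ℝ⦄, 0 ≤ a → 0 ≤ b → a + b = 1 →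
      h (a * x + b * y) ≠ ⊤ := fun x hx y hy a b ha hb' hab =>
    ((key hx hy ha hb' hab).trans_lt (EReal.coe_lt_top _)).ne
  refine ⟨fun x hx y hy a b ha hb' hab => hdom hx hy ha hb' hab,
    fun x hx y hy a b ha hb' hab => ?_⟩
  have := key hx hy ha hb' hab
  rw [← coe_toReal_of_mem hb (hdom hx hy ha hb' hab)] at this
  exact_mod_cast this

theorem mem_subdiff_iff {h : ℝ → EReal} (hb : ∀ x, h x ≠ ⊥) {x y : ℝ} :
    x ∈ subdiff h y ↔ h y ≠ ⊤ ∧ ∀ z, h z ≠ ⊤ → (h y).toReal + x * (z - y) ≤ (h z).toReal := by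
  refine and_congr_right fun hy => forall_congr' fun z => ?_
  by_cases hz : h z = ⊤
  · simp [hz]
  · rw [← coe_toReal_of_mem hb hy, ← coe_toReal_of_mem hb hz, ← EReal.coe_add,
      EReal.coe_le_coe_iff, add_comm]
    simp

/-- A convex function has a subgradient at each interior point of its domain: the supremum of
the slopes of the chords to the left of the point. -/
theorem exists_mem_subdiff {h : ℝ → EReal} (hb : ∀ x, h x ≠ ⊥) (hc : ERealConvex h)
    {a t b : ℝ} (ha : h a ≠ ⊤) (hb' : h b ≠ ⊤) (hat : a < t) (htb : t < b) :
    ∃ p, p ∈ subdiff h t := by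
  have hcv := convexOn_toReal hb hc
  set r : ℝ → ℝ := fun x => (h x).toReal with hr
  have ht : h t ≠ ⊤ := hcv.1.ordConnected.out ha hb' ⟨hat.le, htb.le⟩
  let L : Set ℝ := {p | ∃ y, h y ≠ ⊤ ∧ y < t ∧ p = (r t - r y) / (t - y)}
  have hL : ∀ ⦃z⦄, h z ≠ ⊤ → t < z → (r z - r t) / (z - t) ∈ upperBounds L := by
    rintro z hz htz p ⟨y, hy, hyt, rfl⟩
    exact hcv.slope_mono_adjacent hy hz hyt htz
  refine ⟨sSup L, (mem_subdiff_iff hb).2 ⟨ht, fun z hz => ?_⟩⟩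
  change r t + sSup L * (z - t) ≤ r z
  rcases lt_trichotomy z t with hzt | rfl | htz
  · have h1 : (r t - r z) / (t - z) ≤ sSup L := le_csSup ⟨_, hL hb' htb⟩ ⟨z, hz, hzt, rfl⟩
    rw [div_le_iff₀ (by linarith)] at h1
    linarith
  · simp
  · have h1 : sSup L ≤ (r z - r t) / (z - t) := csSup_le ⟨_, a, ha, hat, rfl⟩ (hL hz htz)
    rw [le_div_iff₀ (by linarith)] at h1
    linarith

/-- On the segment from `y` to `y'` a convex function lies below its chord, which makes it
upper semicontinuous at `y` along that segment. -/
theorem eventually_lt_of_chord {h : ℝ → EReal} (hb : ∀ x, h x ≠ ⊥) (hc : ERealConvex h)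
    {y y' : ℝ} (hy : h y ≠ ⊤) (hy' : h y' ≠ ⊤) (hne : y ≠ y') {c : EReal} (hcy : h y < c) :
    ∀ᶠ z in 𝓝 y, z ∈ uIcc y y' → h z < c := by
  have hd : y' - y ≠ 0 := sub_ne_zero.2 hne.symm
  let l : ℝ → ℝ := fun z =>
    (y' - z) / (y' - y) * (h y).toReal + (z - y) / (y' - y) * (h y').toReal
  have hl : Continuous fun z => (l z : EReal) :=
    continuous_coe_real_ereal.comp (by fun_prop)
  have hly : ((l y : ℝ) : EReal) < c := by
    have : l y = (h y).toReal := by simp [l, hd]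
    rwa [this, coe_toReal_of_mem hb hy]
  filter_upwards [hl.continuousAt.eventually_lt continuousAt_const hly] with z hz hzm
  refine lt_of_le_of_lt ?_ hz
  have hpos : 0 ≤ (y' - z) / (y' - y) ∧ 0 ≤ (z - y) / (y' - y) := by
    rcases lt_or_gt_of_ne hne with hlt | hlt
    · rw [uIcc_of_le hlt.le] at hzm
      exact ⟨div_nonneg (by linarith [hzm.2]) (by linarith),
        div_nonneg (by linarith [hzm.1]) (by linarith)⟩
    · rw [uIcc_of_ge hlt.le] at hzm
      exact ⟨div_nonneg_of_nonpos (by linarith [hzm.1]) (by linarith),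
        div_nonneg_of_nonpos (by linarith [hzm.2]) (by linarith)⟩
  have := hc y y' _ _ hpos.1 hpos.2 (by field_simp; ring)
  rw [show (y' - z) / (y' - y) * y + (z - y) / (y' - y) * y' = z by field_simp; ring,
    ← coe_toReal_of_mem hb hy, ← coe_toReal_of_mem hb hy'] at this
  exact_mod_cast this

/-- In dimension one, a convex lower semicontinuous function is continuous on its whole domain,
endpoints included. -/
theorem continuousOn_effDom {h : ℝ → EReal} (hb : ∀ x, h x ≠ ⊥) (hc : ERealConvex h)
    (hl : LowerSemicontinuous h) : ContinuousOn h (effDom h) := by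
  intro y hy
  refine tendsto_order.2 ⟨fun c hcy => (hl y c hcy).filter_mono nhdsWithin_le_nhds,
    fun c hcy => ?_⟩
  have hright : ∀ᶠ z in 𝓝 y, h z ≠ ⊤ → y < z → h z < c := by
    by_cases hex : ∃ y', h y' ≠ ⊤ ∧ y < y'
    · obtain ⟨y', hy', hlt⟩ := hex
      filter_upwards [eventually_lt_of_chord hb hc hy hy' hlt.ne hcy, eventually_lt_nhds hlt]
        with z hz hzy' _ hyz
      exact hz (by rw [uIcc_of_le hlt.le]; exact ⟨hyz.le, hzy'.le⟩)
    · exact Eventually.of_forall fun z hz hyz => (hex ⟨z, hz, hyz⟩).elim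
  have hleft : ∀ᶠ z in 𝓝 y, h z ≠ ⊤ → z < y → h z < c := by
    by_cases hex : ∃ y', h y' ≠ ⊤ ∧ y' < y
    · obtain ⟨y', hy', hlt⟩ := hex
      filter_upwards [eventually_lt_of_chord hb hc hy hy' hlt.ne' hcy, eventually_gt_nhds hlt]
        with z hz hzy' _ hyz
      exact hz (by rw [uIcc_of_ge hlt.le]; exact ⟨hzy'.le, hyz.le⟩)
    · exact Eventually.of_forall fun z hz hyz => (hex ⟨z, hz, hyz⟩).elim
  filter_upwards [hright.filter_mono nhdsWithin_le_nhds, hleft.filter_mono nhdsWithin_le_nhds,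
    self_mem_nhdsWithin] with z h1 h2 hz
  rcases lt_trichotomy z y with hlt | rfl | hlt
  · exact h2 hz hlt
  · exact hcy
  · exact h1 hz hlt

/-- A maximal monotone operator on the line is the inverse of the subdifferential of a convex
function: the supremum of the affine functions tangent to a potential of the inverse operator. -/
theorem exists_convex_of_maxMonotone (T : ℝ → Set ℝ) (hmax : MaxMonotoneOp T) :
    ∃ h : ℝ → EReal, (∀ x, h x ≠ ⊥) ∧ (∃ x y, y ∈ T x) ∧ LowerSemicontinuous h ∧
      ERealConvex h ∧ ∀ x y, y ∈ T x ↔ x ∈ subdiff h y := by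
  have hne : ∃ x y, y ∈ T x := by
    by_contra hcon
    push Not at hcon
    refine hcon 0 0 (hmax.2 (fun x => {y | x = 0 ∧ y = 0}) ?_ (fun x y hy => (hcon x y hy).elim)
      0 ⟨rfl, rfl⟩)
    rintro x u y v ⟨rfl, rfl⟩ ⟨rfl, rfl⟩
    simp
  obtain ⟨k, hk⟩ := exists_potential T hmax.1
  let h : ℝ → EReal := fun y =>
    ⨆ p : {p : ℝ × ℝ // p.2 ∈ T p.1}, ((k p.1.2 + p.1.1 * (y - p.1.2) : ℝ) : EReal)
  have hle : ∀ ⦃x y⦄, y ∈ T x → ∀ z, ((k y + x * (z - y) : ℝ) : EReal) ≤ h z := fun x y hy z =>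
    le_iSup (fun p : {p : ℝ × ℝ // p.2 ∈ T p.1} =>
      ((k p.1.2 + p.1.1 * (z - p.1.2) : ℝ) : EReal)) ⟨(x, y), hy⟩
  have hval : ∀ ⦃x y⦄, y ∈ T x → h y = (k y : EReal) := by
    intro x y hy
    refine le_antisymm (iSup_le fun p => EReal.coe_le_coe_iff.2 (hk p.2 hy)) ?_
    simpa using hle hy y
  have hbot : ∀ x, h x ≠ ⊥ := by
    intro z hz
    obtain ⟨x, y, hy⟩ := hne
    have := hle hy z
    rw [hz, le_bot_iff] at this
    exact EReal.coe_ne_bot _ this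
  have hsub : ∀ x, T x ⊆ {y | x ∈ subdiff h y} := by
    intro x y hy
    refine ⟨by rw [hval hy]; exact EReal.coe_ne_top _, fun z => ?_⟩
    rw [hval hy, ← EReal.coe_add, add_comm]
    exact hle hy z
  refine ⟨h, hbot, hne, ?_, ?_, fun x y => ⟨fun hy => hsub x hy, fun hx => ?_⟩⟩
  · refine lowerSemicontinuous_iSup fun p => Continuous.lowerSemicontinuous ?_
    exact continuous_coe_real_ereal.comp (by fun_prop)
  · intro x y a b ha hb hab
    refine iSup_le fun ⟨p, hp⟩ => ?_
    have e : k p.2 + p.1 * (a * x + b * y - p.2) =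
        a * (k p.2 + p.1 * (x - p.2)) + b * (k p.2 + p.1 * (y - p.2)) := by
      linear_combination (p.1 * p.2 - k p.2) * hab
    rw [e, EReal.coe_add, EReal.coe_mul, EReal.coe_mul]
    exact add_le_add (mul_le_mul_of_nonneg_left (hle hp x) (by exact_mod_cast ha))
      (mul_le_mul_of_nonneg_left (hle hp y) (by exact_mod_cast hb))
  · refine hmax.2 (fun x => {y | x ∈ subdiff h y}) ?_ hsub x hx
    intro x u y v hu hv
    rw [mem_ofPred_eq, mem_subdiff_iff hbot] at hu hv
    nlinarith [hu.2 v hv.1, hv.2 u hu.1]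

/-! ### Intervals and breakpoints -/

/-- The only frontier points of an interval are its least upper and greatest lower bounds. -/
theorem finite_frontier_of_ordConnected {A : Set ℝ} (hA : A.OrdConnected) :
    (frontier A).Finite := by
  have hlub : {y | IsLUB A y}.Subsingleton := fun x hx y hy => hx.unique hy
  have hglb : {y | IsGLB A y}.Subsingleton := fun x hx y hy => hx.unique hy
  refine (hlub.finite.union hglb.finite).subset fun y hy => ?_
  by_cases hu : y ∈ upperBounds A
  · exact Or.inl (isLUB_of_mem_closure hu hy.1)
  by_cases hl : y ∈ lowerBounds A
  · exact Or.inr (isGLB_of_mem_closure hl hy.1)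
  simp only [upperBounds, lowerBounds, mem_ofPred_eq, not_forall, not_le] at hu hl
  obtain ⟨b, hb, hyb⟩ := hu
  obtain ⟨a, ha, hay⟩ := hl
  exact (hy.2 (mem_interior.2 ⟨Ioo a b, Ioo_subset_Icc_self.trans (hA.out ha hb), isOpen_Ioo,
    hay, hyb⟩)).elim

theorem subset_of_disjoint_frontier {I A : Set ℝ} (hI : IsPreconnected I)
    (hd : Disjoint I (frontier A)) (hne : (I ∩ A).Nonempty) : I ⊆ A := by
  by_contra hcon
  obtain ⟨x, hx, hxA⟩ := not_subset.1 hcon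
  have := isPreconnected_iff_subset_of_disjoint.1 hI (interior A) (closure A)ᶜ isOpen_interior
    isClosed_closure.isOpen_compl
    (by
      intro z hz
      by_cases h1 : z ∈ interior A
      · exact Or.inl h1
      · exact Or.inr fun h2 => disjoint_left.1 hd hz ⟨h2, h1⟩)
    (by
      refine eq_empty_of_forall_notMem ?_
      rintro z ⟨_, h1, h2⟩
      exact h2 (subset_closure (interior_subset h1)))
  rcases this with h1 | h1
  · exact hxA (interior_subset (h1 hx))
  · obtain ⟨z, hz, hzA⟩ := hne
    exact h1 hz (subset_closure hzA)

theorem Breakpoints.isOpen_itv (B : Breakpoints) (i : ℕ) : IsOpen (B.itv i) :=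
  isOpen_Ioo.preimage continuous_coe_real_ereal

theorem Breakpoints.ordConnected_itv (B : Breakpoints) (i : ℕ) : (B.itv i).OrdConnected :=
  ⟨fun _ hx _ hy _ hz => ⟨hx.1.trans_le (EReal.coe_le_coe_iff.2 hz.1),
    (EReal.coe_le_coe_iff.2 hz.2).trans_lt hy.2⟩⟩

/-- The breakpoints and the open intervals between them exhaust the line. -/
theorem Breakpoints.cover (B : Breakpoints) (x : ℝ) :
    ∃ i < B.m, B.pts i = x ∨ x ∈ B.itv i := by
  classical
  let i := Nat.findGreatest (fun j => B.pts j ≤ x) B.m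
  have h0 : B.pts i ≤ x :=
    Nat.findGreatest_spec (P := fun j => B.pts j ≤ x) (m := 0) (Nat.zero_le _) (by simp [B.bot])
  have hle : i ≤ B.m := Nat.findGreatest_le _
  have hlt : i < B.m := by
    refine lt_of_le_of_ne hle fun he => ?_
    rw [he, B.top] at h0
    exact EReal.coe_ne_top _ (top_le_iff.1 h0)
  have h1 : (x : EReal) < B.pts (i + 1) :=
    not_le.1 (Nat.findGreatest_is_greatest (P := fun j => B.pts j ≤ x) (Nat.lt_succ_self i) hlt)
  exact ⟨i, hlt, h0.eq_or_lt.imp_right fun h => ⟨h, h1⟩⟩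

theorem exists_breakpoints {S : Set ℝ} (hS : S.Finite) :
    ∃ B : Breakpoints, ∀ i < B.m, Disjoint (B.itv i) S := by
  classical
  let F : Finset EReal := insert ⊥ (insert ⊤ (hS.toFinset.image ((↑) : ℝ → EReal)))
  have hbot : ⊥ ∈ F := by simp [F]
  have htop : ⊤ ∈ F := by simp [F]
  have hcard : 1 < F.card := Finset.one_lt_card.2 ⟨⊥, hbot, ⊤, htop, bot_ne_top⟩
  have hpos : 0 < F.card := by omega
  let e := F.orderEmbOfFin rfl
  refine ⟨⟨F.card - 1, by omega, fun i => if hi : i < F.card then e ⟨i, hi⟩ else ⊤, ?_, ?_, ?_⟩, ?_⟩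
  · rw [dif_pos hpos, Finset.orderEmbOfFin_zero rfl hpos]
    exact le_bot_iff.1 (Finset.min'_le _ _ hbot)
  · rw [dif_pos (by omega), Finset.orderEmbOfFin_last rfl hpos]
    exact top_le_iff.1 (Finset.le_max' _ _ htop)
  · intro i j hij hj
    rw [dif_pos (by omega), dif_pos (by omega)]
    exact e.strictMono hij
  · intro i hi
    dsimp only at hi
    rw [Set.disjoint_left]
    rintro x ⟨h1, h2⟩ hx
    dsimp only at h1 h2
    rw [dif_pos (by omega)] at h1 h2
    have hxF : (x : EReal) ∈ F := by simp [F, hx]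
    obtain ⟨j, hj⟩ : (x : EReal) ∈ Set.range e := by
      rw [Finset.range_orderEmbOfFin]; exact hxF
    rw [← hj, e.lt_iff_lt, Fin.lt_def] at h1 h2
    dsimp only at h1 h2
    omega

/-! ### The pieces of `h` -/

/-- Two points with a common subgradient lie on a common line of that slope. -/
theorem isAffineOn_of_subset {T : ℝ → Set ℝ} {h : ℝ → EReal} (hb : ∀ x, h x ≠ ⊥)
    (hT : ∀ x y, y ∈ T x ↔ x ∈ subdiff h y) {I : Set ℝ} {x : ℝ} (hI : I ⊆ T x) :
    IsAffineOn h I := by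
  rcases I.eq_empty_or_nonempty with rfl | ⟨y₀, hy₀⟩
  · exact ⟨0, 0, by simp⟩
  have h0 := (mem_subdiff_iff hb).1 ((hT _ _).1 (hI hy₀))
  refine ⟨x, (h y₀).toReal - x * y₀, fun y hy => ?_⟩
  have h1 := (mem_subdiff_iff hb).1 ((hT _ _).1 (hI hy))
  rw [← coe_toReal_of_mem hb h1.1, EReal.coe_eq_coe_iff]
  linarith [h0.2 y h1.1, h1.2 y₀ h0.1]

/-- Where `T` is single-valued and strictly increasing, `h` is strictly convex because a tangent
line of slope `x` touches the graph of `h` only over `T x`, and differentiable because the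
subgradients at nearby points are close. -/
theorem isStrictConvexDiffOn_of_subset {T : ℝ → Set ℝ} {h : ℝ → EReal} (hb : ∀ x, h x ≠ ⊥)
    (hT : ∀ x y, y ∈ T x ↔ x ∈ subdiff h y) {I J : Set ℝ} (hIo : IsOpen I)
    (hIc : I.OrdConnected) (hJo : IsOpen J) {g : ℝ → ℝ} (hg : ∀ x ∈ J, T x = {g x})
    (hmono : StrictMonoOn g J) (hIJ : I ⊆ ⋃ x ∈ J, T x) : IsStrictConvexDiffOn h I := by
  have hsel : ∀ y ∈ I, ∃ p ∈ J, y = g p ∧ p ∈ subdiff h y := by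
    intro y hy
    obtain ⟨p, hp, hyp⟩ := mem_iUnion₂.1 (hIJ hy)
    exact ⟨p, hp, by simpa [hg p hp] using hyp, (hT _ _).1 hyp⟩
  have hfin : ∀ y ∈ I, h y ≠ ⊤ := fun y hy => by
    obtain ⟨p, -, -, hp⟩ := hsel y hy
    exact hp.1
  refine ⟨fun y => (h y).toReal, fun y hy => (coe_toReal_of_mem hb (hfin y hy)).symm,
    ⟨hIc.convex, ?_⟩, ?_⟩
  · intro x hx y hy hxy a b ha hb' hab
    have hw : a • x + b • y ∈ I := hIc.convex hx hy ha.le hb'.le hab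
    simp only [smul_eq_mul] at hw ⊢
    obtain ⟨p, hpJ, hwp, hp⟩ := hsel _ hw
    set w := a * x + b * y with hwdef
    rw [mem_subdiff_iff hb] at hp
    have hstrict : ∀ z, h z ≠ ⊤ → z ≠ w → (h w).toReal + p * (z - w) < (h z).toReal := by
      intro z hz hzw
      refine lt_of_le_of_ne (hp.2 z hz) fun heq => hzw ?_
      have hzp : p ∈ subdiff h z := (mem_subdiff_iff hb).2
        ⟨hz, fun v hv => by rw [← heq]; linarith [hp.2 v hv]⟩
      have := (hT _ _).2 hzp
      rw [hg p hpJ, mem_singleton_iff] at this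
      rw [this, hwp]
    have hxw : x ≠ w := fun e => by
      have : b * (x - y) = 0 := by linear_combination e + x * hab + hwdef
      rcases mul_eq_zero.1 this with h1 | h1
      · exact hb'.ne' h1
      · exact hxy (sub_eq_zero.1 h1)
    have hyw : y ≠ w := fun e => by
      have : a * (y - x) = 0 := by linear_combination e + y * hab + hwdef
      rcases mul_eq_zero.1 this with h1 | h1
      · exact ha.ne' h1
      · exact hxy (sub_eq_zero.1 h1).symm
    have h1 := mul_lt_mul_of_pos_left (hstrict x (hfin x hx) hxw) ha
    have h2 := mul_lt_mul_of_pos_left (hstrict y (hfin y hy) hyw) hb'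
    have h3 : a * ((h w).toReal + p * (x - w)) + b * ((h w).toReal + p * (y - w))
        = (h w).toReal := by
      linear_combination ((h w).toReal - p * w) * hab - p * hwdef
    linarith
  · intro y hy
    obtain ⟨p, hpJ, hyp, hp⟩ := hsel y hy
    rw [mem_subdiff_iff hb] at hp
    refine HasDerivAt.differentiableAt (f' := p) ?_
    rw [hasDerivAt_iff_isLittleO, Asymptotics.isLittleO_iff]
    intro ε hε
    obtain ⟨ρ, hρ, hball⟩ := Metric.isOpen_iff.1 hJo p hpJ
    have hδ : 0 < min ε (ρ / 2) := lt_min hε (by linarith)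
    set δ := min ε (ρ / 2)
    have hδρ : δ < ρ := (min_le_right _ _).trans_lt (by linarith)
    have hm : p - δ ∈ J := hball (by simp [abs_of_pos hδ, hδρ])
    have hM : p + δ ∈ J := hball (by simp [abs_of_pos hδ, hδρ])
    have hy1 : g (p - δ) < y := by rw [hyp]; exact hmono hm hpJ (by linarith)
    have hy2 : y < g (p + δ) := by rw [hyp]; exact hmono hpJ hM (by linarith)
    filter_upwards [hIo.mem_nhds hy, Ioo_mem_nhds hy1 hy2] with z hz hz12
    obtain ⟨q, hqJ, hzq, hq⟩ := hsel z hz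
    rw [mem_subdiff_iff hb] at hq
    have hq1 : p - δ < q := (hmono.lt_iff_lt hm hqJ).1 (hzq ▸ hz12.1)
    have hq2 : q < p + δ := (hmono.lt_iff_lt hqJ hM).1 (hzq ▸ hz12.2)
    have hlow := hp.2 z (hfin z hz)
    have hup := hq.2 y (hfin y hy)
    simp only [smul_eq_mul, Real.norm_eq_abs]
    rw [abs_of_nonneg (by linarith)]
    calc (h z).toReal - (h y).toReal - (z - y) * p ≤ (q - p) * (z - y) := by linarith
      _ ≤ |(q - p) * (z - y)| := le_abs_self _
      _ = |q - p| * |z - y| := abs_mul _ _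
      _ ≤ ε * |z - y| := by
        refine mul_le_mul_of_nonneg_right ?_ (abs_nonneg _)
        refine le_trans ?_ (min_le_left ε (ρ / 2))
        exact abs_le.2 ⟨by linarith, by linarith⟩

/-- If `h` were finite on a part of `I`, it would have a subgradient at some point of `I` lying
strictly between that part and the range of `T`, which would put that point in the range. -/
theorem eq_top_of_disjoint {T : ℝ → Set ℝ} {h : ℝ → EReal} (hb : ∀ x, h x ≠ ⊥)
    (hc : ERealConvex h) (hT : ∀ x y, y ∈ T x ↔ x ∈ subdiff h y) (hne : ∃ x y, y ∈ T x)
    {I : Set ℝ} (hIo : IsOpen I) (hIc : I.OrdConnected) (hd : ∀ y ∈ I, ∀ x, y ∉ T x) :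
    ∀ y ∈ I, h y = ⊤ := by
  intro t ht
  by_contra hfin
  obtain ⟨x₀, y₀, h₀⟩ := hne
  have hy₀I : y₀ ∉ I := fun hy => hd y₀ hy x₀ h₀
  have hy₀ : h y₀ ≠ ⊤ := ((hT _ _).1 h₀).1
  obtain ⟨ρ, hρ, hball⟩ := Metric.isOpen_iff.1 hIo t ht
  have habs : |ρ| / 2 < ρ := by rw [abs_of_pos hρ]; linarith
  have hm : t - ρ / 2 ∈ I := hball (by simpa [Real.dist_eq] using habs)
  have hM : t + ρ / 2 ∈ I := hball (by simpa [Real.dist_eq] using habs)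
  have hlt : y₀ < t - ρ / 2 ∨ t + ρ / 2 < y₀ := by
    by_contra hcon
    push Not at hcon
    exact hy₀I (hIc.out hm hM hcon)
  rcases hlt with hlt | hlt
  · obtain ⟨p, hp⟩ := exists_mem_subdiff hb hc hy₀ hfin hlt (by linarith)
    exact hd _ hm p ((hT _ _).2 hp)
  · obtain ⟨p, hp⟩ := exists_mem_subdiff hb hc hfin hy₀ (by linarith) hlt
    exact hd _ hM p ((hT _ _).2 hp)

theorem MaxMonotoneOp.ordConnected {T : ℝ → Set ℝ} (hmax : MaxMonotoneOp T) (x : ℝ) :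
    (T x).OrdConnected := by
  refine ⟨fun y₁ h₁ y₂ h₂ y hy => ?_⟩
  have key : ∀ ⦃x' v⦄, v ∈ T x' → 0 ≤ (y - v) * (x - x') := by
    intro x' v hv
    have e₁ := hmax.1 h₁ hv
    have e₂ := hmax.1 h₂ hv
    rcases le_total x x' with hx | hx
    · nlinarith [hy.2]
    · nlinarith [hy.1]
  refine hmax.2 (fun x' => T x' ∪ {v | x' = x ∧ v = y}) ?_ (fun _ => subset_union_left) x
    (Or.inr ⟨rfl, rfl⟩)
  rintro x₁ u x₂ v (hu | ⟨rfl, rfl⟩) (hv | ⟨rfl, rfl⟩)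
  · exact hmax.1 hu hv
  · linarith [key hu]
  · exact key hv
  · simp

/-- The breakpoints for `h` are the endpoints of the intervals `T b`, for `b` a breakpoint of
`T`, and of the images under `T` of the intervals between breakpoints. -/
theorem memF_of_pieces {T : ℝ → Set ℝ} {h : ℝ → EReal} (hmax : MaxMonotoneOp T)
    (hb : ∀ x, h x ≠ ⊥) (hc : ERealConvex h) (hl : LowerSemicontinuous h)
    (hT : ∀ x y, y ∈ T x ↔ x ∈ subdiff h y) (hne : ∃ x y, y ∈ T x) (B : Breakpoints)
    (hB : ∀ i < B.m, SingleConstOn T (B.itv i) ∨ SingleContStrictMonoOn T (B.itv i) ∨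
        EmptyOn T (B.itv i)) : MemF h := by
  let A : ℕ → Set ℝ := fun i => ⋃ x ∈ B.itv i, T x
  have hA : ∀ i < B.m, (A i).OrdConnected := by
    intro i hi
    rcases hB i hi with ⟨c, hcst⟩ | ⟨g, hg, hcont, -⟩ | hemp
    · refine (Set.Subsingleton.isPreconnected fun y hy z hz => ?_).ordConnected
      obtain ⟨p, hp, hyp⟩ := mem_iUnion₂.1 hy
      obtain ⟨q, hq, hzq⟩ := mem_iUnion₂.1 hz
      rw [hcst p hp, mem_singleton_iff] at hyp
      rw [hcst q hq, mem_singleton_iff] at hzq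
      rw [hyp, hzq]
    · have : A i = g '' B.itv i := by
        ext y
        simp only [A, mem_iUnion₂, mem_image]
        refine exists_congr fun x => ⟨?_, ?_⟩
        · rintro ⟨hx, hy⟩
          rw [hg x hx, mem_singleton_iff] at hy
          exact ⟨hx, hy.symm⟩
        · rintro ⟨hx, rfl⟩
          exact ⟨hx, by rw [hg x hx]; rfl⟩
      rw [this]
      exact ((B.ordConnected_itv i).isPreconnected.image g hcont).ordConnected
    · refine (Set.Subsingleton.isPreconnected fun y hy => ?_).ordConnected
      obtain ⟨p, hp, hyp⟩ := mem_iUnion₂.1 hy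
      rw [hemp p hp] at hyp
      exact hyp.elim
  -- `B.pts 0 = ⊥` has `toReal = 0`, which only adds harmless points to `S`.
  let S : Set ℝ := ⋃ i ∈ Finset.range B.m, (frontier (T (B.pts i).toReal) ∪ frontier (A i))
  have hS : S.Finite := Set.Finite.biUnion (Finset.finite_toSet _) fun i hi =>
    (finite_frontier_of_ordConnected (hmax.ordConnected _)).union
      (finite_frontier_of_ordConnected (hA i (Finset.mem_range.1 hi)))
  obtain ⟨C, hC⟩ := exists_breakpoints hS
  refine ⟨C, hb, hl, hc, continuousOn_effDom hb hc hl, fun j hj => ?_⟩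
  have hd : ∀ i < B.m, Disjoint (C.itv j) (frontier (T (B.pts i).toReal)) ∧
      Disjoint (C.itv j) (frontier (A i)) := by
    intro i hi
    have hsub : frontier (T (B.pts i).toReal) ∪ frontier (A i) ⊆ S :=
      subset_biUnion_of_mem (u := fun i => frontier (T (B.pts i).toReal) ∪ frontier (A i))
        (Finset.mem_coe.2 (Finset.mem_range.2 hi))
    exact disjoint_union_right.1 ((hC j hj).mono_right hsub)
  have hIo := C.isOpen_itv j
  have hIc := C.ordConnected_itv j
  by_cases hex : ∃ y ∈ C.itv j, ∃ x, y ∈ T x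
  swap
  · push Not at hex
    exact Or.inr (Or.inr (eq_top_of_disjoint hb hc hT hne hIo hIc hex))
  obtain ⟨y, hy, x, hyx⟩ := hex
  obtain ⟨i, hi, hix | hix⟩ := B.cover x
  · left
    have hsub := subset_of_disjoint_frontier hIc.isPreconnected (hd i hi).1
      ⟨y, hy, by simpa [hix] using hyx⟩
    exact isAffineOn_of_subset hb hT hsub
  · have hsub : C.itv j ⊆ A i := subset_of_disjoint_frontier hIc.isPreconnected (hd i hi).2
      ⟨y, hy, mem_iUnion₂.2 ⟨x, hix, hyx⟩⟩
    rcases hB i hi with ⟨c, hcst⟩ | ⟨g, hg, -, hg'⟩ | hemp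
    · left
      -- Here `A i` is the singleton `T x`.
      refine isAffineOn_of_subset (x := x) hb hT fun z hz => ?_
      obtain ⟨p, hp, hzp⟩ := mem_iUnion₂.1 (hsub hz)
      rwa [hcst x hix, ← hcst p hp]
    · exact Or.inr (Or.inl (isStrictConvexDiffOn_of_subset hb hT hIo hIc (B.isOpen_itv i) hg hg'
        hsub))
    · rw [hemp x hix] at hyx
      exact hyx.elim

/-- Recovery of penalty functions in the class `𝒯`: every maximal monotone `T ∈ 𝒯` is the
proximity operator of a proper, lsc function `f` with `f + ½(·)² ∈ F`. -/
theorem stmt12 (T : ℝ → Set ℝ) (hT : MemT T) (hmax : MaxMonotoneOp T) :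
    ∃ f : ℝ → EReal,
      (∀ x, f x ≠ ⊥) ∧ (∃ x : ℝ, f x ≠ ⊤) ∧ LowerSemicontinuous f ∧
      MemF (fun x => f x + ((x ^ 2 / 2 : ℝ) : EReal)) ∧
      ∀ x : ℝ, T x = {y : ℝ | ∀ z : ℝ,
        f y + (((x - y) ^ 2 / 2 : ℝ) : EReal) ≤ f z + (((x - z) ^ 2 / 2 : ℝ) : EReal)} := by
  obtain ⟨B, T', hmax', hsub, hB⟩ := hT
  obtain rfl : T' = T := funext fun x =>
    (hmax.2 T' hmax'.1 hsub x).antisymm (hsub x)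
  obtain ⟨h, hb, hne, hl, hc, hT⟩ := exists_convex_of_maxMonotone T' hmax
  have hF := memF_of_pieces hmax hb hc hl hT hne B hB
  have hcoe : ∀ (y a b : ℝ), h y + (a : EReal) + (b : EReal) = h y + ((a + b : ℝ) : EReal) :=
    fun y a b => by rw [add_assoc, ← EReal.coe_add]
  refine ⟨fun y => h y + ((-(y ^ 2 / 2) : ℝ) : EReal), ?_, ?_, ?_, ?_, ?_⟩
  · intro x hx
    rcases EReal.add_eq_bot_iff.1 hx with h1 | h1
    · exact hb x h1
    · exact EReal.coe_ne_bot _ h1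
  · obtain ⟨x, y, hy⟩ := hne
    exact ⟨y, EReal.add_ne_top ((hT _ _).1 hy).1 (EReal.coe_ne_top _)⟩
  · refine hl.add' (Continuous.lowerSemicontinuous
      (continuous_coe_real_ereal.comp (by fun_prop))) fun x => ?_
    exact EReal.continuousAt_add (Or.inr (EReal.coe_ne_bot _)) (Or.inr (EReal.coe_ne_top _))
  · convert hF using 2 with y
    rw [hcoe]
    simp
  · intro x
    ext y
    rw [hT, mem_subdiff_iff hb, Set.mem_ofPred_eq]
    simp only [hcoe]
    have hreal : ∀ y z, h y ≠ ⊤ → h z ≠ ⊤ →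
        (h y + ((-(y ^ 2 / 2) + (x - y) ^ 2 / 2 : ℝ) : EReal) ≤
          h z + ((-(z ^ 2 / 2) + (x - z) ^ 2 / 2 : ℝ) : EReal) ↔
        (h y).toReal + x * (z - y) ≤ (h z).toReal) := by
      intro y z hy hz
      rw [← coe_toReal_of_mem hb hy, ← coe_toReal_of_mem hb hz, ← EReal.coe_add, ← EReal.coe_add,
        EReal.coe_le_coe_iff, EReal.toReal_coe, EReal.toReal_coe]
      constructor <;> intro hh <;> nlinarith
    constructor
    · rintro ⟨hy, hsubg⟩ z
      by_cases hz : h z = ⊤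
      · rw [hz, EReal.top_add_coe]
        exact le_top
      · exact (hreal y z hy hz).2 (hsubg z hz)
    · intro hmin
      have hy : h y ≠ ⊤ := by
        intro hy
        obtain ⟨x₀, y₀, h₀⟩ := hne
        have := hmin y₀
        rw [hy, EReal.top_add_coe, top_le_iff] at this
        exact EReal.add_ne_top ((hT _ _).1 h₀).1 (EReal.coe_ne_top _) this
      exact ⟨hy, fun z hz => (hreal y z hy hz).1 (hmin z)⟩
end
end

section
/- Let α > 0 and define the set-valued operator T : ℝ ⇒ ℝ by T(x) = {x} if |x| > α, T(x) = {0} if |x| < α, T(α) = [0, α], and T(−α) = [−α, 0]. Then T is maximal monotone; moreover, T is the unique maximal monotone operator whose graph contains the graph of the hard thresholding operator H_α, defined by H_α(x) = x if |x| > α and H_α(x) = 0 otherwise. -/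
/-!
The operator `T` fills in the jumps of hard thresholding `H_α` at `±α`. A monotone operator whose
graph contains that of `H_α` can, at each `x`, only take values between the left and right limits
of `H_α` at `x`, that is, values in `T x` (`subset_filled`). Since `T` is itself monotone and
extends `H_α`, it is the largest monotone extension of `H_α`, which gives both its maximality and
its uniqueness.
-/

noncomputable section


/-- In one variable, monotonicity of an operator says that values at distinct points are ordered
like the points. -/
theorem MonotoneOp.le_of_lt {S : ℝ → Set ℝ} (hS : MonotoneOp S) {x y u v : ℝ}
    (hu : u ∈ S x) (hv : v ∈ S y) (hxy : x < y) : u ≤ v := by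
  have h := hS hu hv
  by_contra! hlt
  nlinarith [mul_pos (sub_pos.2 hlt) (sub_pos.2 hxy)]

/-- The graph of the filled-in operator, written as one disjunction over the branches. -/
theorem mem_filled_iff {α : ℝ} (hα : 0 < α) {T : ℝ → Set ℝ}
    (h1 : ∀ x : ℝ, α < |x| → T x = {x})
    (h2 : ∀ x : ℝ, |x| < α → T x = {0})
    (h3 : T α = Set.Icc 0 α)
    (h4 : T (-α) = Set.Icc (-α) 0) (x u : ℝ) :
    u ∈ T x ↔ (x < -α ∧ u = x) ∨ (x = -α ∧ -α ≤ u ∧ u ≤ 0) ∨ (-α < x ∧ x < α ∧ u = 0) ∨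
      (x = α ∧ 0 ≤ u ∧ u ≤ α) ∨ (α < x ∧ u = x) := by
  rcases lt_trichotomy x (-α) with hx | rfl | hx
  · rw [h1 x (lt_abs.2 (Or.inr (by linarith))), Set.mem_singleton_iff]
    grind
  · rw [h4, Set.mem_Icc]
    grind
  rcases lt_trichotomy x α with hx' | rfl | hx'
  · rw [h2 x (abs_lt.2 ⟨hx, hx'⟩), Set.mem_singleton_iff]
    grind
  · rw [h3, Set.mem_Icc]
    grind
  · rw [h1 x (lt_abs.2 (Or.inl hx')), Set.mem_singleton_iff]
    grind

/-- Any monotone operator extending hard thresholding is contained in the filled-in operator: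
comparing a value at `x` with `H_α` at points on either side of `x` confines it to the gap between
the one-sided limits of `H_α` at `x`. -/
theorem subset_filled {α : ℝ} (hα : 0 < α) {T S : ℝ → Set ℝ}
    (h1 : ∀ x : ℝ, α < |x| → T x = {x})
    (h2 : ∀ x : ℝ, |x| < α → T x = {0})
    (h3 : T α = Set.Icc 0 α)
    (h4 : T (-α) = Set.Icc (-α) 0)
    (hS : MonotoneOp S) (hH : ∀ x : ℝ, (if α < |x| then x else 0) ∈ S x) (x : ℝ) :
    S x ⊆ T x := by
  intro u hu
  rw [mem_filled_iff hα h1 h2 h3 h4]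
  have hpos : ∀ y, α < y → y ∈ S y := fun y hy => by
    simpa [lt_abs.2 (Or.inl hy)] using hH y
  have hneg : ∀ y, y < -α → y ∈ S y := fun y hy => by
    simpa [lt_abs.2 (Or.inr (lt_neg.1 hy))] using hH y
  have hzero : ∀ y, -α < y → y < α → (0 : ℝ) ∈ S y := fun y hy hy' => by
    simpa [(abs_lt.2 ⟨hy, hy'⟩).not_gt] using hH y
  -- For `α ≤ |x|`, a violation is refuted by a point strictly between `x` and `u`, chosen beyond
  -- the threshold so that `H_α` is the identity there.
  have right_le : α ≤ x → u ≤ x := fun hx => by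
    by_contra! h
    have := hS.le_of_lt hu (hpos ((x + u) / 2) (by linarith)) (by linarith)
    linarith
  have right_ge : α < x → x ≤ u := fun hx => by
    by_contra! h
    have hm : max α u < x := max_lt hx h
    have h5 := le_max_left α u
    have h6 := le_max_right α u
    have := hS.le_of_lt (hpos ((x + max α u) / 2) (by linarith)) hu (by linarith)
    linarith
  have left_ge : x ≤ -α → x ≤ u := fun hx => by
    by_contra! h
    have := hS.le_of_lt (hneg ((x + u) / 2) (by linarith)) hu (by linarith)
    linarith
  have left_le : x < -α → u ≤ x := fun hx => by
    by_contra! h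
    have hm : x < min (-α) u := lt_min hx h
    have h5 := min_le_left (-α) u
    have h6 := min_le_right (-α) u
    have := hS.le_of_lt hu (hneg ((x + min (-α) u) / 2) (by linarith)) (by linarith)
    linarith
  have mid_ge : -α < x → x ≤ α → 0 ≤ u := fun hx hx' =>
    hS.le_of_lt (hzero ((x + -α) / 2) (by linarith) (by linarith)) hu (by linarith)
  have mid_le : -α ≤ x → x < α → u ≤ 0 := fun hx hx' =>
    hS.le_of_lt hu (hzero ((x + α) / 2) (by linarith) (by linarith)) (by linarith)
  rcases lt_trichotomy x (-α) with hx | hx | hx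
  · exact Or.inl ⟨hx, le_antisymm (left_le hx) (left_ge hx.le)⟩
  · exact Or.inr (Or.inl ⟨hx, hx ▸ left_ge hx.le, mid_le hx.ge (by linarith)⟩)
  rcases lt_trichotomy x α with hx' | hx' | hx'
  · exact Or.inr (Or.inr (Or.inl ⟨hx, hx', le_antisymm (mid_le hx.le hx') (mid_ge hx hx'.le)⟩))
  · exact Or.inr (Or.inr (Or.inr (Or.inl ⟨hx', mid_ge hx hx'.le, hx' ▸ right_le hx'.ge⟩)))
  · exact Or.inr (Or.inr (Or.inr (Or.inr ⟨hx', le_antisymm (right_le hx'.le) (right_ge hx')⟩)))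

/-- The operator `T` (with `T(x) = {x}` for `|x| > α`, `{0}` for `|x| < α`,
`T(α) = [0,α]`, `T(−α) = [−α,0]`) is the unique maximal monotone operator whose graph
contains the graph of the hard thresholding operator `H_α`. -/
theorem stmt15 (α : ℝ) (hα : 0 < α) (T : ℝ → Set ℝ)
    (h1 : ∀ x : ℝ, α < |x| → T x = {x})
    (h2 : ∀ x : ℝ, |x| < α → T x = {0})
    (h3 : T α = Set.Icc 0 α)
    (h4 : T (-α) = Set.Icc (-α) 0) :
    MaxMonotoneOp T ∧
      ∀ S : ℝ → Set ℝ, MaxMonotoneOp S →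
        (∀ x : ℝ, (if α < |x| then x else 0) ∈ S x) → S = T := by
  have hT := mem_filled_iff hα h1 h2 h3 h4
  have hmono : MonotoneOp T := by
    have key : ∀ x u y v : ℝ, u ∈ T x → v ∈ T y → x < y → u ≤ v := by
      intro x u y v hu hv hxy
      rw [hT] at hu hv
      rcases hu with h | h | h | h | h <;> rcases hv with h' | h' | h' | h' | h' <;> linarith
    intro x u y v hu hv
    rcases lt_trichotomy x y with h | h | h
    · exact mul_nonneg_of_nonpos_of_nonpos (sub_nonpos.2 (key x u y v hu hv h)) (by linarith)
    · simp [h]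
    · exact mul_nonneg (sub_nonneg.2 (key y v x u hv hu h)) (by linarith)
  have hHT : ∀ x : ℝ, (if α < |x| then x else 0) ∈ T x := by
    intro x
    rw [hT]
    split_ifs with hx
    · rcases lt_abs.1 hx with h | h
      · simp [h]
      · simp [lt_neg.1 h]
    · obtain ⟨ha, hb⟩ := abs_le.1 (not_lt.1 hx)
      grind
  refine ⟨⟨hmono, fun S hS hTS => ?_⟩, fun S hS hH => ?_⟩
  · exact subset_filled hα h1 h2 h3 h4 hS fun x => hTS x (hHT x)
  · have hST := subset_filled hα h1 h2 h3 h4 hS.1 hH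
    exact funext fun x => (hST x).antisymm (hS.2 T hmono hST x)
end
end

section
/- Let α > 0 and define f : ℝ → ℝ by f(y) = −½(|y| − α)² if |y| ≤ α and f(y) = 0 if |y| > α. Then for every x ∈ ℝ, the set of global minimizers argmin_{y ∈ ℝ} { f(y) + ½(x − y)² } equals: {x} if |x| > α; {0} if |x| < α; the interval [0, α] if x = α; and the interval [−α, 0] if x = −α. In particular, the graph of the hard thresholding operator H_α (H_α(x) = x if |x| > α, H_α(x) = 0 otherwise) is contained in the graph of x ↦ argmin_{y} { f(y) + ½(x − y)² }. -/
/-!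
On the inner region `|y| ≤ α` the quadratic terms in `y` cancel and the objective equals
`(x² - α²) / 2 + (α |y| - x y)`; on the outer region it equals `(x - y)² / 2`.
If `|x| > α`, the inner values are positive, so the minimum `0` is attained only at `y = x`.
If `|x| ≤ α`, the outer values are positive while `(x² - α²) / 2 ≤ 0`, so the minimizers are the
inner points where the nonnegative term `α |y| - x y` vanishes: only `0` when `|x| < α`, and
the whole segment between `0` and `x` when `|x| = α`.
-/

noncomputable section

/-- A nonempty set on which `g` is constant, with `g` strictly larger off it, is the set of
global minimizers of `g`. -/
theorem argmin_eq_of_value (g : ℝ → ℝ) (S : Set ℝ) (m : ℝ) (hne : S.Nonempty)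
    (h1 : ∀ y ∈ S, g y = m) (h2 : ∀ y, y ∉ S → m < g y) :
    {y : ℝ | ∀ z : ℝ, g y ≤ g z} = S := by
  obtain ⟨s, hs⟩ := hne
  ext y
  constructor
  · intro hy
    by_contra hn
    have := hy s
    rw [h1 s hs] at this
    exact absurd (h2 y hn) (not_lt.mpr this)
  · intro hy z
    rw [h1 y hy]
    by_cases hz : z ∈ S
    · exact (h1 z hz).ge
    · exact (h2 z hz).le

/-- The convex penalty recovered from the hard thresholding operator: its proximity
map is the maximal monotone extension of `H_α`, whose graph contains that of `H_α`. -/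
theorem stmt16 (α : ℝ) (hα : 0 < α) (f : ℝ → ℝ)
    (hf1 : ∀ y : ℝ, |y| ≤ α → f y = -(|y| - α) ^ 2 / 2)
    (hf2 : ∀ y : ℝ, α < |y| → f y = 0) :
    (∀ x : ℝ, α < |x| →
      {y : ℝ | ∀ z : ℝ, f y + (x - y) ^ 2 / 2 ≤ f z + (x - z) ^ 2 / 2} = {x}) ∧
    (∀ x : ℝ, |x| < α →
      {y : ℝ | ∀ z : ℝ, f y + (x - y) ^ 2 / 2 ≤ f z + (x - z) ^ 2 / 2} = {0}) ∧
    ({y : ℝ | ∀ z : ℝ, f y + (α - y) ^ 2 / 2 ≤ f z + (α - z) ^ 2 / 2} = Set.Icc 0 α) ∧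
    ({y : ℝ | ∀ z : ℝ, f y + (-α - y) ^ 2 / 2 ≤ f z + (-α - z) ^ 2 / 2} = Set.Icc (-α) 0) ∧
    (∀ x : ℝ, (if α < |x| then x else 0) ∈
      {y : ℝ | ∀ z : ℝ, f y + (x - y) ^ 2 / 2 ≤ f z + (x - z) ^ 2 / 2}) := by
  have inner : ∀ x y : ℝ, |y| ≤ α →
      f y + (x - y) ^ 2 / 2 = (x ^ 2 - α ^ 2) / 2 + (α * |y| - x * y) := by
    intro x y hy
    rw [hf1 y hy]
    nlinarith [sq_abs y]
  have outer : ∀ x y : ℝ, α < |y| → f y + (x - y) ^ 2 / 2 = (x - y) ^ 2 / 2 := by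
    intro x y hy
    rw [hf2 y hy, zero_add]
  have cross : ∀ x y : ℝ, x * y ≤ |x| * |y| := fun x y => by
    rw [← abs_mul]
    exact le_abs_self _
  -- For `|x| ≤ α` every outer point is strictly worse than the inner reference value.
  have outer_gt : ∀ x y : ℝ, |x| ≤ α → α < |y| →
      (x ^ 2 - α ^ 2) / 2 < f y + (x - y) ^ 2 / 2 := by
    intro x y hx hy
    rw [outer x y hy]
    have hxy : x - y ≠ 0 := fun h => by
      rw [sub_eq_zero.mp h] at hx
      linarith
    have hpos : 0 < (x - y) ^ 2 := by positivity
    nlinarith [sq_abs x, abs_nonneg x]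
  have A : ∀ x : ℝ, α < |x| →
      {y : ℝ | ∀ z : ℝ, f y + (x - y) ^ 2 / 2 ≤ f z + (x - z) ^ 2 / 2} = {x} := by
    intro x hx
    refine argmin_eq_of_value (fun y => f y + (x - y) ^ 2 / 2) {x} 0 ⟨x, rfl⟩ ?_ ?_
    · rintro y rfl
      simp [hf2 y hx]
    · intro y hy
      show 0 < f y + (x - y) ^ 2 / 2
      rcases le_or_gt (|y|) α with h | h
      · rw [inner x y h]
        -- The value is at least `(|x| - α) (|x| + α - 2 |y|) / 2`.
        have : 0 < (|x| - α) * (|x| + α - 2 * |y|) :=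
          mul_pos (by linarith) (by linarith)
        nlinarith [cross x y, sq_abs x]
      · rw [outer x y h]
        have hxy : x - y ≠ 0 := fun h => hy (sub_eq_zero.mp h).symm
        positivity
  have B : ∀ x : ℝ, |x| < α →
      {y : ℝ | ∀ z : ℝ, f y + (x - y) ^ 2 / 2 ≤ f z + (x - z) ^ 2 / 2} = {0} := by
    intro x hx
    refine argmin_eq_of_value (fun y => f y + (x - y) ^ 2 / 2) {0} ((x ^ 2 - α ^ 2) / 2)
      ⟨0, rfl⟩ ?_ ?_
    · rintro y rfl
      show f 0 + (x - 0) ^ 2 / 2 = _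
      rw [inner x 0 (by simpa using hα.le)]
      simp
    · intro y hy
      show _ < f y + (x - y) ^ 2 / 2
      rcases le_or_gt (|y|) α with h | h
      · rw [inner x y h]
        have hy0 : 0 < |y| := abs_pos.mpr hy
        nlinarith [cross x y, mul_pos (sub_pos.mpr hx) hy0]
      · exact outer_gt x y hx.le h
  have C : {y : ℝ | ∀ z : ℝ, f y + (α - y) ^ 2 / 2 ≤ f z + (α - z) ^ 2 / 2} = Set.Icc 0 α := by
    refine argmin_eq_of_value (fun y => f y + (α - y) ^ 2 / 2) _ ((α ^ 2 - α ^ 2) / 2)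
      ⟨0, le_rfl, hα.le⟩ ?_ ?_
    · rintro y ⟨h0, h1⟩
      show f y + (α - y) ^ 2 / 2 = _
      rw [inner α y (by rwa [abs_of_nonneg h0]), abs_of_nonneg h0]
      ring
    · intro y hy
      show _ < f y + (α - y) ^ 2 / 2
      rcases le_or_gt (|y|) α with h | h
      · have hneg : y < 0 := by
          by_contra hn
          exact hy ⟨not_lt.mp hn, (abs_le.mp h).2⟩
        rw [inner α y h, abs_of_neg hneg]
        nlinarith
      · exact outer_gt α y (abs_of_pos hα).le h
  have D : {y : ℝ | ∀ z : ℝ, f y + (-α - y) ^ 2 / 2 ≤ f z + (-α - z) ^ 2 / 2}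
      = Set.Icc (-α) 0 := by
    refine argmin_eq_of_value (fun y => f y + (-α - y) ^ 2 / 2) _ (((-α) ^ 2 - α ^ 2) / 2)
      ⟨0, by linarith, le_rfl⟩ ?_ ?_
    · rintro y ⟨h0, h1⟩
      show f y + (-α - y) ^ 2 / 2 = _
      rw [inner (-α) y (by rw [abs_of_nonpos h1]; linarith), abs_of_nonpos h1]
      ring
    · intro y hy
      show _ < f y + (-α - y) ^ 2 / 2
      rcases le_or_gt (|y|) α with h | h
      · have hpos : 0 < y := by
          by_contra hn
          exact hy ⟨(abs_le.mp h).1, not_lt.mp hn⟩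
        rw [inner (-α) y h, abs_of_pos hpos]
        nlinarith [mul_pos hα hpos]
      · exact outer_gt (-α) y (by rw [abs_neg, abs_of_pos hα]) h
  refine ⟨A, B, C, D, fun x => ?_⟩
  rcases lt_trichotomy (|x|) α with h | h | h
  · rw [if_neg h.not_gt, B x h]
    rfl
  · rw [if_neg h.not_gt]
    rcases (abs_eq hα.le).mp h with rfl | rfl
    · rw [C]
      exact ⟨le_rfl, hα.le⟩
    · rw [D]
      exact ⟨by linarith, le_rfl⟩
  · rw [if_pos h, A x h]
    rfl
end
end

section
/- Let λ > 0 and define E : ℝ → ℝ by E(x) = 1/λ for x ≤ 0 and E(x) = (λx + e^{−λx})/λ for x > 0. Then the Fenchel conjugate E*(p) := sup_{x ∈ ℝ} (p·x − E(x)) satisfies: E*(p) = +∞ for p < 0; E*(0) = −1/λ; E*(p) = (1 − p)(ln(1 − p) − 1)/λ for 0 < p < 1; E*(1) = 0; and E*(p) = +∞ for p > 1. -/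
noncomputable section


/-! On `x > 0` the quantity to be maximised is `p * x - E x = -((1 - p) * x) - exp (-lam * x) / lam`,
and on `x ≤ 0` it is `p * x - 1 / lam`.

For `p < 0` the second expression is unbounded as `x → -∞`, and for `p > 1` the first one is
unbounded as `x → +∞`. For `0 < p < 1` the critical point is `x = -log (1 - p) / lam`, and the
matching upper bound is the tangent-line inequality `exp_neg_ge_tangent` for the exponential.
For `p = 0` the value is attained at `x = 0` (tangent line at `0`), while for `p = 1` the supremum
`0` is only approached as `x → +∞`. -/

/-- Tangent-line bound for `t ↦ exp (-t)` at `t = -log q`, where its value is `q`. -/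
lemma exp_neg_ge_tangent (q t : ℝ) (hq : 0 < q) :
    q - q * t - q * Real.log q ≤ Real.exp (-t) := by
  have h := Real.add_one_le_exp (-t - Real.log q)
  rw [Real.exp_sub, Real.exp_log hq, le_div_iff₀ hq] at h
  linarith

lemma iSup_coe_eq_top (f : ℝ → ℝ) (h : ∀ y : ℝ, ∃ x, y < f x) :
    (⨆ x : ℝ, ((f x : ℝ) : EReal)) = ⊤ := by
  rw [EReal.eq_top_iff_forall_lt]
  intro y
  obtain ⟨x, hx⟩ := h y
  exact lt_iSup_iff.2 ⟨x, EReal.coe_lt_coe_iff.2 hx⟩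

lemma iSup_coe_eq_of_attained (f : ℝ → ℝ) (m : ℝ) (h : ∀ x, f x ≤ m) (x₀ : ℝ) (h₀ : f x₀ = m) :
    (⨆ x : ℝ, ((f x : ℝ) : EReal)) = (m : EReal) := by
  apply le_antisymm
  · exact iSup_le fun x => EReal.coe_le_coe_iff.2 (h x)
  · rw [← h₀]
    exact le_iSup (fun x => ((f x : ℝ) : EReal)) x₀

/-- The Fenchel conjugate of the superexpectation function of the exponential
distribution with rate `λ`. -/
theorem stmt19 (lam : ℝ) (hlam : 0 < lam) (E : ℝ → ℝ)
    (hE1 : ∀ x : ℝ, x ≤ 0 → E x = 1 / lam)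
    (hE2 : ∀ x : ℝ, 0 < x → E x = (lam * x + Real.exp (-lam * x)) / lam) :
    (∀ p : ℝ, p < 0 → (⨆ x : ℝ, ((p * x - E x : ℝ) : EReal)) = ⊤) ∧
    ((⨆ x : ℝ, (((0 : ℝ) * x - E x : ℝ) : EReal)) = ((-1 / lam : ℝ) : EReal)) ∧
    (∀ p : ℝ, 0 < p → p < 1 →
      (⨆ x : ℝ, ((p * x - E x : ℝ) : EReal))
        = (((1 - p) * (Real.log (1 - p) - 1) / lam : ℝ) : EReal)) ∧
    ((⨆ x : ℝ, (((1 : ℝ) * x - E x : ℝ) : EReal)) = (0 : EReal)) ∧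
    (∀ p : ℝ, 1 < p → (⨆ x : ℝ, ((p * x - E x : ℝ) : EReal)) = ⊤) := by
  have hE2' : ∀ x : ℝ, 0 < x → E x = x + Real.exp (-(lam * x)) / lam := by
    intro x hx
    rw [hE2 x hx, neg_mul]
    field_simp
  have hpos : 0 < 1 / lam := by positivity
  refine ⟨fun p hp => ?_, ?_, fun p hp0 hp1 => ?_, ?_, fun p hp => ?_⟩
  · apply iSup_coe_eq_top
    intro y
    -- chosen so that `p * x - 1 / lam = |y| + 1`
    refine ⟨(|y| + 1 / lam + 1) / p, ?_⟩
    rw [hE1 _ (div_nonpos_of_nonneg_of_nonpos (by positivity) hp.le),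
      mul_div_cancel₀ _ hp.ne]
    linarith [le_abs_self y]
  · apply iSup_coe_eq_of_attained _ _ _ 0
    · rw [hE1 0 le_rfl]
      ring
    · intro x
      rw [neg_div]
      rcases le_or_gt x 0 with hx | hx
      · rw [hE1 x hx]
        linarith
      · rw [hE2' x hx]
        have h := Real.add_one_le_exp (-(lam * x))
        have h2 : 1 / lam ≤ x + Real.exp (-(lam * x)) / lam := by
          rw [div_le_iff₀ hlam, add_mul, div_mul_cancel₀ _ hlam.ne']
          linarith
        linarith
  · have hq : 0 < 1 - p := by linarith
    apply iSup_coe_eq_of_attained _ _ _ (-Real.log (1 - p) / lam)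
    · have hx : 0 < -Real.log (1 - p) / lam :=
        div_pos (neg_pos.2 (Real.log_neg hq (by linarith))) hlam
      rw [hE2' _ hx, mul_div_cancel₀ _ hlam.ne', neg_neg, Real.exp_log hq]
      ring
    · intro x
      rw [le_div_iff₀ hlam]
      rcases le_or_gt x 0 with hx | hx
      · rw [hE1 x hx, sub_mul, div_mul_cancel₀ _ hlam.ne']
        have h := exp_neg_ge_tangent (1 - p) 0 hq
        rw [neg_zero, Real.exp_zero] at h
        have h2 : p * x * lam ≤ 0 :=
          mul_nonpos_of_nonpos_of_nonneg (mul_nonpos_of_nonneg_of_nonpos hp0.le hx) hlam.le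
        linarith
      · rw [hE2' x hx, sub_mul, add_mul, div_mul_cancel₀ _ hlam.ne']
        have h := exp_neg_ge_tangent (1 - p) (lam * x) hq
        linarith
  · apply le_antisymm
    · refine iSup_le fun x => ?_
      rw [← EReal.coe_zero, EReal.coe_le_coe_iff]
      rcases le_or_gt x 0 with hx | hx
      · rw [hE1 x hx]
        linarith
      · rw [hE2' x hx]
        have : 0 < Real.exp (-(lam * x)) / lam := by positivity
        linarith
    · refine le_of_forall_lt fun c hc => ?_
      obtain ⟨r, hcr, hr⟩ := EReal.lt_iff_exists_real_btwn.1 hc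
      rw [← EReal.coe_zero, EReal.coe_lt_coe_iff] at hr
      have hs : 0 < -r * lam := mul_pos (neg_pos.2 hr) hlam
      -- with `lam * x = 1 / (-r * lam)`, the bound `exp (-t) ≤ 1 / t` gives value at least `r`
      have hx : 0 < 1 / (-r * lam) / lam := by positivity
      refine lt_iSup_iff.2 ⟨1 / (-r * lam) / lam, hcr.trans_le ?_⟩
      rw [EReal.coe_le_coe_iff, hE2' _ hx, mul_div_cancel₀ _ hlam.ne', Real.exp_neg]
      have h : 1 / (-r * lam) ≤ Real.exp (1 / (-r * lam)) := by
        linarith [Real.add_one_le_exp (1 / (-r * lam))]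
      have h2 : (Real.exp (1 / (-r * lam)))⁻¹ ≤ -r * lam := by
        have := inv_anti₀ (by positivity) h
        rwa [inv_div, div_one] at this
      have h3 : (Real.exp (1 / (-r * lam)))⁻¹ / lam ≤ -r := by
        rwa [div_le_iff₀ hlam]
      linarith
  · apply iSup_coe_eq_top
    intro y
    have hp' : 0 < p - 1 := by linarith
    -- chosen so that `(p - 1) * x - 1 / lam = |y| + 1`
    obtain ⟨x, hxdef⟩ : ∃ x, x = (|y| + 1 / lam + 1) / (p - 1) := ⟨_, rfl⟩
    have hx : 0 < x := by
      rw [hxdef]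
      positivity
    refine ⟨x, ?_⟩
    rw [hE2' x hx]
    have h1 : Real.exp (-(lam * x)) / lam ≤ 1 / lam := by
      gcongr
      exact Real.exp_le_one_iff.2 (by nlinarith)
    have h2 : (p - 1) * x = |y| + 1 / lam + 1 := by
      rw [hxdef, mul_div_cancel₀ _ hp'.ne']
    linarith [le_abs_self y]
end
end
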